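/- arXiv:2211.04919 — 6 statements merged into one kernel-verified Lean document; each statement's English description precedes it below -/
import Mathlib

section
/- Suppose there exist a real number ρ > 0 and a strictly positive continuous function h : X → ℝ such that B_q(h) = ρ·h. Then (1/N)·log(B_q^N(1)(x)) converges to log ρ as N → ∞, uniformly in x ∈ X; that is, sup_{x∈X} |(1/N)·log(B_q^N(1)(x)) − log ρ| → 0 as N → ∞. (Here B_q^N denotes the N-th iterate of B_q and 1 the constant function one; note B_q^N(1)(x) ≥ (inf_{x∈X} q_x(Θ))^N > 0, so the logarithm is defined.) -/
open MeasureTheory Filter Topology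

variable {X Θ : Type*}

/-- The `N`-th iterate of the transfer operator `B_q` of the IFSm `(X, τ, q)`. -/
noncomputable def transferIter [MeasurableSpace Θ] (q : X → Measure Θ) (τ : Θ → X → X) :
    ℕ → (X → ℝ) → X → ℝ
  | 0 => fun f => f
  | N + 1 => fun f x => ∫ θ, transferIter q τ N f (τ θ x) ∂(q x)

theorem transferIter_one_bounds
    [MetricSpace X] [CompactSpace X] [MeasurableSpace X] [BorelSpace X]
    [MetricSpace Θ] [CompactSpace Θ] [MeasurableSpace Θ] [BorelSpace Θ]
    (τ : Θ → X → X) (hτ : Continuous fun p : Θ × X => τ p.1 p.2)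
    (q : X → Measure Θ)
    (hqfin : ∃ C : ENNReal, C < ⊤ ∧ ∀ x, q x Set.univ ≤ C)
    (hqmeas : ∀ A : Set Θ, MeasurableSet A → Measurable fun x => q x A)
    (ρ : ℝ) (hρ : 0 < ρ) (h : C(X, ℝ))
    (heig : ∀ x, ∫ θ, h (τ θ x) ∂(q x) = ρ * h x)
    (m M : ℝ) (hm : 0 < m) (hmh : ∀ x, m ≤ h x) (hM : 0 < M) (hhM : ∀ x, h x ≤ M) (N : ℕ) :
    Measurable (transferIter q τ N (fun _ => 1)) ∧
      ∀ x, ρ ^ N / M * h x ≤ transferIter q τ N (fun _ => 1) x ∧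
        transferIter q τ N (fun _ => 1) x ≤ ρ ^ N / m * h x := by
  obtain ⟨C, hC, hqC⟩ := hqfin
  have hfin : ∀ x, IsFiniteMeasure (q x) := fun x => ⟨(hqC x).trans_lt hC⟩
  let κ : ProbabilityTheory.Kernel X Θ := ⟨q, Measure.measurable_of_measurable_coe q hqmeas⟩
  have hκ : ProbabilityTheory.IsFiniteKernel κ := ⟨C, hC, hqC⟩
  induction N with
  | zero =>
    refine ⟨measurable_const, fun x => ⟨?_, ?_⟩⟩
    · simp only [transferIter, pow_zero]
      rw [div_mul_eq_mul_div, one_mul, div_le_one hM]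
      exact hhM x
    · simp only [transferIter, pow_zero]
      rw [div_mul_eq_mul_div, one_mul, one_le_div hm]
      exact hmh x
  | succ N ih =>
    obtain ⟨ihm, ihb⟩ := ih
    have hτm : Measurable fun p : X × Θ => τ p.2 p.1 :=
      (hτ.comp continuous_swap).measurable
    have hint : ∀ x, Integrable (fun θ => h (τ θ x)) (q x) := by
      intro x
      have hc : Continuous fun θ => h (τ θ x) :=
        h.continuous.comp (hτ.comp (by fun_prop : Continuous fun θ : Θ => (θ, x)))
      exact hc.integrable_of_hasCompactSupport (HasCompactSupport.of_compactSpace _)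
    have hintT : ∀ x, Integrable (fun θ => transferIter q τ N (fun _ => 1) (τ θ x)) (q x) := by
      intro x
      refine Integrable.mono' ((hint x).const_mul (ρ ^ N / m)) ?_ ?_
      · exact (ihm.comp (hτm.comp (measurable_const.prodMk measurable_id))).aestronglyMeasurable
      · refine Eventually.of_forall fun θ => ?_
        have h0 : 0 ≤ transferIter q τ N (fun _ => 1) (τ θ x) :=
          le_trans (mul_nonneg (by positivity) (hm.le.trans (hmh _))) (ihb _).1
        rw [Real.norm_of_nonneg h0]
        exact (ihb _).2
    refine ⟨?_, fun x => ⟨?_, ?_⟩⟩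
    · have := StronglyMeasurable.integral_kernel_prod_right' (κ := κ)
        (f := fun p : X × Θ => transferIter q τ N (fun _ => 1) (τ p.2 p.1))
        (ihm.comp hτm).stronglyMeasurable
      exact this.measurable
    · calc ρ ^ (N + 1) / M * h x = ∫ θ, ρ ^ N / M * h (τ θ x) ∂(q x) := by
            rw [integral_const_mul, heig]; ring
        _ ≤ _ := integral_mono ((hint x).const_mul _) (hintT x) fun θ => (ihb _).1
    · calc _ ≤ ∫ θ, ρ ^ N / m * h (τ θ x) ∂(q x) :=
            integral_mono (hintT x) ((hint x).const_mul _) fun θ => (ihb _).2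
        _ = ρ ^ (N + 1) / m * h x := by
            rw [integral_const_mul, heig]; ring

/-- If `B_q(h) = ρ h` for some `ρ > 0` and strictly positive continuous `h`, then
`(1/N) log(B_q^N(1)(x)) → log ρ` uniformly in `x`. -/
theorem log_transfer_iter_one_tendsto_log_spectral_radius
    [MetricSpace X] [CompactSpace X] [MeasurableSpace X] [BorelSpace X]
    [MetricSpace Θ] [CompactSpace Θ] [MeasurableSpace Θ] [BorelSpace Θ]
    (τ : Θ → X → X) (hτ : Continuous fun p : Θ × X => τ p.1 p.2)
    (q : X → Measure Θ)
    (hqfin : ∃ C : ENNReal, C < ⊤ ∧ ∀ x, q x Set.univ ≤ C)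
    (hqpos : ∃ c : ENNReal, 0 < c ∧ ∀ x, c ≤ q x Set.univ)
    (hqmeas : ∀ A : Set Θ, MeasurableSet A → Measurable fun x => q x A)
    (hqcont : ∀ g : C(Θ, ℝ), Continuous fun x => ∫ θ, g θ ∂(q x))
    (ρ : ℝ) (hρ : 0 < ρ) (h : C(X, ℝ)) (hh : ∀ x, 0 < h x)
    (heig : ∀ x, ∫ θ, h (τ θ x) ∂(q x) = ρ * h x) :
    Tendsto
      (fun N : ℕ =>
        ⨆ x : X, |Real.log (transferIter q τ N (fun _ => 1) x) / N - Real.log ρ|)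
      atTop (𝓝 0) := by
  rcases isEmpty_or_nonempty X with hX | hX
  · simp
  obtain ⟨a, -, ha⟩ := isCompact_univ.exists_isMinOn Set.univ_nonempty h.continuous.continuousOn
  obtain ⟨b, -, hb⟩ := isCompact_univ.exists_isMaxOn Set.univ_nonempty h.continuous.continuousOn
  have ha' : ∀ x, h a ≤ h x := fun x => ha (Set.mem_univ x)
  have hb' : ∀ x, h x ≤ h b := fun x => hb (Set.mem_univ x)
  have hbd := transferIter_one_bounds τ hτ q hqfin hqmeas ρ hρ h heig (h a) (h b) (hh a) ha'
    (hh b) hb'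
  have key : ∀ N : ℕ, 0 < N → ∀ x,
      |Real.log (transferIter q τ N (fun _ => 1) x) / N - Real.log ρ|
        ≤ (Real.log (h b) - Real.log (h a)) / N := by
    intro N hN x
    obtain ⟨h1, h2⟩ := (hbd N).2 x
    have hNr : (0 : ℝ) < N := by exact_mod_cast hN
    have hA := hh a
    have hB := hh b
    have hxp := hh x
    have hpN : 0 < ρ ^ N := pow_pos hρ N
    have hp1 : 0 < ρ ^ N / h b * h x := by positivity
    have l1 := Real.log_le_log hp1 h1
    have l2 := Real.log_le_log (hp1.trans_le h1) h2
    rw [Real.log_mul (by positivity) hxp.ne', Real.log_div hpN.ne' (by positivity),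
      Real.log_pow] at l1 l2
    have l3 := Real.log_le_log hA (ha' x)
    have l4 := Real.log_le_log hxp (hb' x)
    have e : Real.log (transferIter q τ N (fun _ => 1) x) / N - Real.log ρ
        = (Real.log (transferIter q τ N (fun _ => 1) x) - N * Real.log ρ) / N := by
      field_simp
    rw [e, abs_div, abs_of_pos hNr]
    gcongr
    rw [abs_le]
    constructor <;> linarith
  refine squeeze_zero' (Eventually.of_forall fun N => Real.iSup_nonneg fun x => abs_nonneg _)
    ?_ (tendsto_const_div_atTop_nhds_zero_nat (Real.log (h b) - Real.log (h a)))
  filter_upwards [eventually_gt_atTop 0] with N hN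
  exact ciSup_le (key N hN)
end

section
/- Assume X and Θ are nonempty. There exist a real number ρ > 0 and a Borel probability measure ν on X such that ∫_X B_q(f) dν = ρ·∫_X f dν for every f ∈ C(X,ℝ) (i.e., ν is an eigenmeasure of the Markov operator L_q, dual to B_q, with eigenvalue ρ). Moreover ρ^N ≤ ‖B_q^N(1)‖_∞ for every N ≥ 1, so ρ is at most the spectral radius of B_q. -/
open MeasureTheory Filter Topology

variable {X Θ : Type*}

/-- Monotonicity of a positive linear operator. -/
theorem pos_op_mono [TopologicalSpace X] (B : C(X, ℝ) →ₗ[ℝ] C(X, ℝ))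
    (hB : ∀ f : C(X, ℝ), (∀ x, 0 ≤ f x) → ∀ x, 0 ≤ B f x)
    (f g : C(X, ℝ)) (h : ∀ x, f x ≤ g x) (x : X) : B f x ≤ B g x := by
  have := hB (g - f) (fun x => by simpa using h x) x
  simpa using this

/-- Collatz-Wielandt set. -/
def CWset [TopologicalSpace X] (B : C(X, ℝ) →ₗ[ℝ] C(X, ℝ)) : Set ℝ :=
  {l | ∃ u : C(X, ℝ), (∀ x, 0 < u x) ∧ ∀ x, B u x ≤ l * u x}

theorem CW_no_strict [TopologicalSpace X] [CompactSpace X] [Nonempty X]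
    (B : C(X, ℝ) →ₗ[ℝ] C(X, ℝ))
    (hB : ∀ f : C(X, ℝ), (∀ x, 0 ≤ f x) → ∀ x, 0 ≤ B f x)
    (r : ℝ) (hr0 : 0 < r) (hr : IsGLB (CWset B) r)
    (f : C(X, ℝ)) (hf : ∀ x, B f x < r * f x) : False := by
  obtain ⟨xm, -, hxm⟩ := isCompact_univ.exists_isMinOn Set.univ_nonempty
    (f := fun x => r * f x - B f x) (by fun_prop)
  obtain ⟨ε, hε⟩ : ∃ ε, ε = r * f xm - B f xm := ⟨_, rfl⟩
  have hε0 : 0 < ε := by have := hf xm; linarith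
  have hεle : ∀ x, ε ≤ r * f x - B f x := fun x => by
    rw [hε]; exact hxm (Set.mem_univ x)
  have hK : ∀ x, |f x| ≤ ‖f‖ := fun x => f.norm_coe_le_norm x
  have hK0 : 0 < ‖f‖ + 1 := by positivity
  obtain ⟨δ, hδ⟩ : ∃ δ, δ = ε / (‖f‖ + 1) := ⟨_, rfl⟩
  have hδ0 : 0 < δ := by rw [hδ]; positivity
  have hδε : δ * (‖f‖ + 1) = ε := by rw [hδ]; field_simp
  have hδf : ∀ x, δ * |f x| < ε := fun x => by
    have := mul_le_mul_of_nonneg_left (hK x) hδ0.le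
    linarith
  -- f is nonnegative
  have hfnn : ∀ x, 0 ≤ f x := by
    obtain ⟨l, hl, -, hlt⟩ := hr.exists_between (show r < r + δ by linarith)
    obtain ⟨u, hu, hBu⟩ := hl
    obtain ⟨x0, -, hx0⟩ := isCompact_univ.exists_isMaxOn Set.univ_nonempty
      (f := fun x => - f x / u x)
      (Continuous.continuousOn (by
        exact (by fun_prop : Continuous fun x => - f x).div (by fun_prop) (fun x => (hu x).ne')))
    obtain ⟨t, ht⟩ : ∃ t, t = - f x0 / u x0 := ⟨_, rfl⟩
    have ht0 : f x0 = - (t * u x0) := by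
      rw [ht, div_mul_cancel₀ _ (hu x0).ne']; ring
    have htx : ∀ x, - f x ≤ t * u x := fun x => by
      have h1 : - f x / u x ≤ t := by rw [ht]; exact hx0 (Set.mem_univ x)
      exact (div_le_iff₀ (hu x)).1 h1
    by_contra! hneg
    obtain ⟨y, hy⟩ := hneg
    have htpos : 0 < t := by
      by_contra! h
      have := htx y
      have := mul_nonpos_of_nonpos_of_nonneg h (hu y).le
      linarith
    have h1 : B ((-t) • u) x0 ≤ B f x0 :=
      pos_op_mono B hB _ _ (fun x => by simpa using by linarith [htx x]) x0
    simp only [map_smul, ContinuousMap.coe_smul, Pi.smul_apply, smul_eq_mul] at h1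
    have h2 := mul_le_mul_of_nonneg_left (hBu x0) htpos.le
    have h3 := hεle x0
    have h4 := hδf x0
    have h5 := neg_abs_le (f x0)
    have h6 := mul_le_mul_of_nonneg_left h5 hδ0.le
    have h7 : 0 < (r + δ) * f x0 + t * l * u x0 := by linarith
    rw [ht0] at h7
    have h8 : 0 < (l - (r + δ)) * (t * u x0) := by linarith
    have h9 : 0 < t * u x0 := mul_pos htpos (hu x0)
    have := mul_neg_of_neg_of_pos (show l - (r + δ) < 0 by linarith) h9
    linarith
  have hfpos : ∀ x, 0 < f x := fun x => by
    have h1 := hB f hfnn x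
    have h2 := hf x
    exact pos_of_mul_pos_right (lt_of_le_of_lt h1 h2) hr0.le
  have hmem : r - δ ∈ CWset B := ⟨f, hfpos, fun x => by
    have h1 := hεle x
    have h2 := hδf x
    rw [abs_of_pos (hfpos x)] at h2
    linarith⟩
  have := hr.1 hmem
  linarith

theorem exists_eigenfunctional [TopologicalSpace X] [CompactSpace X] [Nonempty X]
    (B : C(X, ℝ) →ₗ[ℝ] C(X, ℝ))
    (hB : ∀ f : C(X, ℝ), (∀ x, 0 ≤ f x) → ∀ x, 0 ≤ B f x)
    (c : ℝ) (hc : 0 < c) (hBc : ∀ x, c ≤ B 1 x) :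
    ∃ r : ℝ, 0 < r ∧ ∃ φ : C(X, ℝ) →ₗ[ℝ] ℝ, φ 1 = 1 ∧
      (∀ f : C(X, ℝ), (∀ x, 0 ≤ f x) → 0 ≤ φ f) ∧ ∀ f, φ (B f) = r * φ f := by
  have hne : (CWset B).Nonempty := ⟨‖B 1‖, 1, fun x => by simp, fun x => by
    simpa using (le_abs_self _).trans ((B 1).norm_coe_le_norm x)⟩
  have hlb : c ∈ lowerBounds (CWset B) := by
    rintro l ⟨u, hu, hBu⟩
    obtain ⟨x0, -, hx0⟩ := isCompact_univ.exists_isMinOn Set.univ_nonempty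
      (f := fun x => u x) (by fun_prop)
    have h1 : B ((u x0) • (1 : C(X, ℝ))) x0 ≤ B u x0 :=
      pos_op_mono B hB _ _ (fun x => by simpa using hx0 (Set.mem_univ x)) x0
    simp only [map_smul, ContinuousMap.coe_smul, Pi.smul_apply, smul_eq_mul] at h1
    have h2 := mul_le_mul_of_nonneg_left (hBc x0) (hu x0).le
    have h3 := hBu x0
    have h4 : u x0 * c ≤ u x0 * l := by linarith
    exact le_of_mul_le_mul_left h4 (hu x0)
  obtain ⟨r, hr⟩ : ∃ r, IsGLB (CWset B) r := ⟨_, isGLB_csInf hne ⟨c, hlb⟩⟩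
  have hr0 : 0 < r := hc.trans_le (hr.2 hlb)
  let T : C(X, ℝ) →ₗ[ℝ] C(X, ℝ) := r • LinearMap.id - B
  have hT : ∀ f, T f = r • f - B f := fun f => rfl
  let s : Set C(X, ℝ) := {g | ∀ x, g x < 0}
  have hs1 : Convex ℝ s := by
    intro f hf g hg a b ha hb hab x
    have h1 := hf x
    have h2 := hg x
    simp only [ContinuousMap.add_apply, ContinuousMap.coe_smul, Pi.smul_apply, smul_eq_mul]
    rcases ha.eq_or_lt with rfl | ha
    · have : b = 1 := by linarith
      subst this; simpa using h2
    · have := mul_neg_of_pos_of_neg ha h1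
      have := mul_nonpos_of_nonneg_of_nonpos hb h2.le
      linarith
  have hs2 : IsOpen s := by
    have := ContinuousMap.isOpen_setOfPred_mapsTo (X := X) (Y := ℝ) isCompact_univ (isOpen_Iio (a := (0:ℝ)))
    convert this using 2
    simp [Set.MapsTo, s]
  have hdisj : Disjoint s (LinearMap.range T : Set C(X, ℝ)) := by
    rw [Set.disjoint_left]
    rintro g hg ⟨f, rfl⟩
    refine CW_no_strict B hB r hr0 hr (-f) (fun x => ?_)
    have := hg x
    simp only [hT, ContinuousMap.sub_apply, ContinuousMap.coe_smul, Pi.smul_apply,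
      smul_eq_mul] at this
    simp only [map_neg, ContinuousMap.neg_apply]
    linarith
  obtain ⟨ψ, u, hψs, hψt⟩ := geometric_hahn_banach_open hs1 hs2
    (LinearMap.range T).convex hdisj
  have hu : u ≤ 0 := by simpa using hψt 0 (Submodule.zero_mem _)
  have hψT : ∀ f, ψ (T f) = 0 := by
    intro f
    by_contra h
    have h1 := hψt (T (((u - 1) / ψ (T f)) • f)) ⟨_, rfl⟩
    rw [map_smul, map_smul, smul_eq_mul, div_mul_cancel₀ _ h] at h1
    linarith
  have hψpos : ∀ f : C(X, ℝ), (∀ x, 0 < f x) → 0 < ψ f := by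
    intro f hf
    have := hψs (-f) (fun x => by simpa using hf x)
    rw [map_neg] at this
    linarith
  have h1 : 0 < ψ 1 := hψpos 1 (fun x => by simp)
  have hψnn : ∀ f : C(X, ℝ), (∀ x, 0 ≤ f x) → 0 ≤ ψ f := by
    intro f hf
    by_contra! h
    have := hψpos (f + (-ψ f / ψ 1) • (1 : C(X, ℝ))) (fun x => by
      have h2 : 0 < -ψ f / ψ 1 := div_pos (by linarith) h1
      have := hf x
      simp only [ContinuousMap.add_apply, ContinuousMap.coe_smul, Pi.smul_apply, smul_eq_mul,
        ContinuousMap.one_apply]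
      linarith)
    rw [map_add, map_smul, smul_eq_mul, div_mul_cancel₀ _ h1.ne'] at this
    linarith
  refine ⟨r, hr0, (ψ 1)⁻¹ • (ψ : C(X, ℝ) →ₗ[ℝ] ℝ), ?_, ?_, ?_⟩
  · simp [h1.ne']
  · intro f hf
    have := hψnn f hf
    simp only [LinearMap.smul_apply, ContinuousLinearMap.coe_coe, smul_eq_mul]
    positivity
  · intro f
    have := hψT f
    rw [hT, map_sub, map_smul, smul_eq_mul] at this
    simp only [LinearMap.smul_apply, ContinuousLinearMap.coe_coe, smul_eq_mul]
    rw [← sub_eq_zero.1 this]; ring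

theorem exists_measure_of_functional
    [MetricSpace X] [CompactSpace X] [MeasurableSpace X] [BorelSpace X]
    (φ : C(X, ℝ) →ₗ[ℝ] ℝ) (h1 : φ 1 = 1) (hφ : ∀ f : C(X, ℝ), (∀ x, 0 ≤ f x) → 0 ≤ φ f) :
    ∃ ν : Measure X, IsProbabilityMeasure ν ∧ ∀ f : C(X, ℝ), ∫ x, f x ∂ν = φ f := by
  let L : CompactlySupportedContinuousMap X ℝ →ₗ[ℝ] ℝ :=
    { toFun := fun f => φ f.toContinuousMap
      map_add' := fun f g => by rw [← map_add]; rfl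
      map_smul' := fun a f => by rw [RingHom.id_apply, ← map_smul]; rfl }
  let Λ : CompactlySupportedContinuousMap X ℝ →ₚ[ℝ] ℝ :=
    PositiveLinearMap.mk₀ L (fun f hf => hφ _ (fun x => hf x))
  have key : ∀ f : C(X, ℝ), ∫ x, f x ∂(RealRMK.rieszMeasure Λ) = φ f := fun f =>
    RealRMK.integral_rieszMeasure Λ ⟨f, HasCompactSupport.of_compactSpace _⟩
  refine ⟨RealRMK.rieszMeasure Λ, ⟨?_⟩, key⟩
  have := key 1
  simp only [ContinuousMap.one_apply, integral_const, h1, smul_eq_mul, mul_one] at this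
  rw [measureReal_def] at this
  exact (ENNReal.toReal_eq_one_iff _).1 this

theorem transfer_continuous
    [MetricSpace X] [CompactSpace X]
    [MetricSpace Θ] [CompactSpace Θ] [MeasurableSpace Θ] [BorelSpace Θ]
    (τ : Θ → X → X) (hτ : Continuous fun p : Θ × X => τ p.1 p.2)
    (q : X → Measure Θ)
    (hqfin : ∃ C : ENNReal, C < ⊤ ∧ ∀ x, q x Set.univ ≤ C)
    (hqcont : ∀ g : C(Θ, ℝ), Continuous fun x => ∫ θ, g θ ∂(q x)) (f : C(X, ℝ)) :
    Continuous fun x => ∫ θ, f (τ θ x) ∂(q x) := by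
  obtain ⟨C, hC, hqC⟩ := hqfin
  have hfin : ∀ x, IsFiniteMeasure (q x) := fun x => ⟨(hqC x).trans_lt hC⟩
  let G : C(X × Θ, ℝ) := ⟨fun p => f (τ p.2 p.1), f.continuous.comp (hτ.comp continuous_swap)⟩
  let g : C(X, C(Θ, ℝ)) := G.curry
  have hg : ∀ x θ, g x θ = f (τ θ x) := fun x θ => rfl
  have hInteg : ∀ x (h : C(Θ, ℝ)), Integrable (fun θ => h θ) (q x) := fun x h =>
    h.continuous.integrable_of_hasCompactSupport (HasCompactSupport.of_compactSpace _)
  simp_rw [← hg]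
  rw [continuous_iff_continuousAt]
  intro x0
  have hz : Tendsto (fun x => ∫ θ, (g x - g x0) θ ∂(q x)) (𝓝 x0) (𝓝 0) := by
    have hb : ∀ x, ‖∫ θ, (g x - g x0) θ ∂(q x)‖ ≤ ‖g x - g x0‖ * C.toReal := fun x => by
      refine (norm_integral_le_of_norm_le_const
        (Eventually.of_forall fun θ => (g x - g x0).norm_coe_le_norm θ)).trans ?_
      refine mul_le_mul_of_nonneg_left ?_ (norm_nonneg _)
      exact ENNReal.toReal_mono hC.ne (hqC x)
    refine squeeze_zero_norm hb ?_
    have : Continuous fun x => ‖g x - g x0‖ * C.toReal := by fun_prop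
    simpa using this.tendsto x0
  have h2 := hz.add ((hqcont (g x0)).tendsto x0)
  rw [zero_add] at h2
  refine h2.congr (fun x => ?_)
  rw [← integral_add (hInteg x _) (hInteg x _)]
  simp

theorem exists_eigenmeasure_markov_operator
    [MetricSpace X] [CompactSpace X] [MeasurableSpace X] [BorelSpace X] [Nonempty X]
    [MetricSpace Θ] [CompactSpace Θ] [MeasurableSpace Θ] [BorelSpace Θ] [Nonempty Θ]
    (τ : Θ → X → X) (hτ : Continuous fun p : Θ × X => τ p.1 p.2)
    (q : X → Measure Θ)
    (hqfin : ∃ C : ENNReal, C < ⊤ ∧ ∀ x, q x Set.univ ≤ C)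
    (hqpos : ∃ c : ENNReal, 0 < c ∧ ∀ x, c ≤ q x Set.univ)
    (hqmeas : ∀ A : Set Θ, MeasurableSet A → Measurable fun x => q x A)
    (hqcont : ∀ g : C(Θ, ℝ), Continuous fun x => ∫ θ, g θ ∂(q x)) :
    ∃ ρ : ℝ, 0 < ρ ∧ ∃ ν : Measure X, IsProbabilityMeasure ν ∧
      (∀ f : C(X, ℝ), ∫ x, (∫ θ, f (τ θ x) ∂(q x)) ∂ν = ρ * ∫ x, f x ∂ν) ∧
      ∀ N : ℕ, 1 ≤ N → ρ ^ N ≤ ⨆ x : X, transferIter q τ N (fun _ => 1) x := by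

  have hcont := transfer_continuous τ hτ q hqfin hqcont
  obtain ⟨C, hC, hqC⟩ := hqfin
  obtain ⟨c, hc, hqc⟩ := hqpos
  have hfin : ∀ x, IsFiniteMeasure (q x) := fun x => ⟨(hqC x).trans_lt hC⟩
  have hτx : ∀ x, Continuous fun θ => τ θ x := fun x =>
    hτ.comp (Continuous.prodMk continuous_id continuous_const)
  have hInteg : ∀ x (f : C(X, ℝ)), Integrable (fun θ => f (τ θ x)) (q x) := fun x f =>
    (f.continuous.comp (hτx x)).integrable_of_hasCompactSupport
      (HasCompactSupport.of_compactSpace _)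
  let B : C(X, ℝ) →ₗ[ℝ] C(X, ℝ) :=
    { toFun := fun f => ⟨fun x => ∫ θ, f (τ θ x) ∂(q x), hcont f⟩
      map_add' := fun f g => by
        ext x
        exact integral_add (hInteg x f) (hInteg x g)
      map_smul' := fun a f => by
        ext x
        exact integral_const_mul a _ }
  have hBapp : ∀ f x, B f x = ∫ θ, f (τ θ x) ∂(q x) := fun f x => rfl
  have hcfin : c ≠ ⊤ := by
    obtain ⟨x⟩ := ‹Nonempty X›
    exact (((hqc x).trans (hqC x)).trans_lt hC).ne
  obtain ⟨r, hr, φ, hφ1, hφ, hφB⟩ := exists_eigenfunctional B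
    (fun f hf x => integral_nonneg fun θ => hf _) c.toReal (ENNReal.toReal_pos hc.ne' hcfin)
    (fun x => by
      rw [hBapp]
      simp only [ContinuousMap.one_apply, integral_const, smul_eq_mul, mul_one]
      exact ENNReal.toReal_mono (measure_ne_top _ _) (hqc x))
  obtain ⟨ν, hν, hνφ⟩ := exists_measure_of_functional φ hφ1 hφ
  have hit : ∀ N : ℕ, ∃ F : C(X, ℝ), (∀ x, F x = transferIter q τ N (fun _ => 1) x) ∧
      φ F = r ^ N := by
    intro N
    induction N with
    | zero => exact ⟨1, fun x => rfl, by simpa using hφ1⟩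
    | succ N ih =>
      obtain ⟨F, hF, hFφ⟩ := ih
      refine ⟨B F, fun x => ?_, by rw [hφB, hFφ]; ring⟩
      rw [hBapp]
      simp only [hF, transferIter]
  refine ⟨r, hr, ν, hν, fun f => ?_, fun N _ => ?_⟩
  · rw [hνφ f, ← hφB, ← hνφ]
    rfl
  · obtain ⟨F, hF, hFφ⟩ := hit N
    simp_rw [← hF]
    rw [← hFφ]
    have hbdd : BddAbove (Set.range fun x => F x) := by
      rw [← Set.image_univ]
      exact (isCompact_univ.image F.continuous).bddAbove
    have := hφ ((⨆ x, F x) • (1 : C(X, ℝ)) - F) (fun x => by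
      simpa using le_ciSup hbdd x)
    rw [map_sub, map_smul, hφ1] at this
    simpa using this
end

section
/- Assume X and Θ are nonempty. The set H(τ) of holonomic Borel probability measures on X × Θ is nonempty, convex, and compact in the weak-* topology. -/
open MeasureTheory Filter Topology

variable {X Θ : Type*}

/-- A Borel probability measure on `X × Θ` is holonomic (w.r.t. `τ`) if
`∫ (f(τ_θ(x)) − f(x)) dν̂(x,θ) = 0` for every `f ∈ C(X,ℝ)`. -/
def Holonomic [MeasurableSpace X] [MeasurableSpace Θ] [TopologicalSpace X]
    (τ : Θ → X → X) (μhat : Measure (X × Θ)) : Prop :=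
  ∀ f : C(X, ℝ), ∫ p : X × Θ, (f (τ p.2 p.1) - f p.1) ∂μhat = 0

/-- The holonomic test function attached to `f`, as a bounded continuous function. -/
noncomputable def holTest [MetricSpace X] [CompactSpace X] [MetricSpace Θ] [CompactSpace Θ]
    (τ : Θ → X → X) (hτ : Continuous fun p : Θ × X => τ p.1 p.2) (f : C(X, ℝ)) :
    BoundedContinuousFunction (X × Θ) ℝ :=
  BoundedContinuousFunction.mkOfCompact
    ⟨fun p => f (τ p.2 p.1) - f p.1,
      (f.continuous.comp (hτ.comp continuous_swap)).sub (f.continuous.comp continuous_fst)⟩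

/-- Empirical measures along the orbit of `x` under `T`, at the fixed parameter `t`. -/
noncomputable def empMeas [MeasurableSpace X] [MeasurableSpace Θ]
    (T : X → X) (x : X) (t : Θ) (n : ℕ) : Measure (X × Θ) :=
  ((n + 1 : ℕ) : ENNReal)⁻¹ • ∑ k ∈ Finset.range (n + 1), Measure.dirac (T^[k] x, t)

theorem empMeas_prob [MeasurableSpace X] [MeasurableSpace Θ]
    (T : X → X) (x : X) (t : Θ) (n : ℕ) : IsProbabilityMeasure (empMeas T x t n) := by
  constructor
  simp only [empMeas, Measure.smul_apply, Measure.finsetSum_apply, measure_univ, smul_eq_mul,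
    Finset.sum_const, Finset.card_range, nsmul_eq_mul, mul_one]
  exact ENNReal.inv_mul_cancel (by simp) (ENNReal.natCast_ne_top _)

/-- The set of holonomic Borel probability measures on `X × Θ` is nonempty,
compact in the weak-* topology, and convex. -/
theorem holonomic_nonempty_compact_convex
    [MetricSpace X] [CompactSpace X] [MeasurableSpace X] [BorelSpace X] [Nonempty X]
    [MetricSpace Θ] [CompactSpace Θ] [MeasurableSpace Θ] [BorelSpace Θ] [Nonempty Θ]
    (τ : Θ → X → X) (hτ : Continuous fun p : Θ × X => τ p.1 p.2) :
    {μ : ProbabilityMeasure (X × Θ) | Holonomic τ (μ : Measure (X × Θ))}.Nonempty ∧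
    IsCompact {μ : ProbabilityMeasure (X × Θ) | Holonomic τ (μ : Measure (X × Θ))} ∧
    (∀ μ κ : ProbabilityMeasure (X × Θ),
      Holonomic τ (μ : Measure (X × Θ)) → Holonomic τ (κ : Measure (X × Θ)) →
      ∀ a b : ENNReal, a + b = 1 →
        ∃ σ : ProbabilityMeasure (X × Θ), Holonomic τ (σ : Measure (X × Θ)) ∧
          (σ : Measure (X × Θ)) =
            a • (μ : Measure (X × Θ)) + b • (κ : Measure (X × Θ))) := by
  have hint : ∀ (μ : Measure (X × Θ)) [IsFiniteMeasure μ] (f : C(X, ℝ)),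
      Integrable (fun p : X × Θ => f (τ p.2 p.1) - f p.1) μ := fun μ _ f =>
    (holTest τ hτ f).integrable μ
  have hcont : ∀ f : C(X, ℝ), Continuous fun μ : ProbabilityMeasure (X × Θ) =>
      ∫ p : X × Θ, (f (τ p.2 p.1) - f p.1) ∂(μ : Measure (X × Θ)) := fun f =>
    ProbabilityMeasure.continuous_integral_boundedContinuousFunction (holTest τ hτ f)
  refine ⟨?_, ?_, ?_⟩
  · obtain ⟨x⟩ := ‹Nonempty X›
    obtain ⟨t⟩ := ‹Nonempty Θ›
    let m : ℕ → ProbabilityMeasure (X × Θ) := fun n => ⟨empMeas (τ t) x t n, empMeas_prob _ _ _ _⟩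
    obtain ⟨ν, -, hν⟩ := isCompact_univ.ultrafilter_le_nhds
      ((hyperfilter ℕ).map m) (by simp)
    have hν' : Tendsto m (hyperfilter ℕ : Filter ℕ) (𝓝 ν) := hν
    refine ⟨ν, fun f => ?_⟩
    have h1 := ((hcont f).tendsto ν).comp hν'
    refine tendsto_nhds_unique h1 ?_
    have hval : ∀ n, ∫ p : X × Θ, (f (τ p.2 p.1) - f p.1) ∂(m n : Measure (X × Θ))
        = ((n : ℝ) + 1)⁻¹ * (f ((τ t)^[n + 1] x) - f x) := by
      intro n
      change ∫ p : X × Θ, (f (τ p.2 p.1) - f p.1) ∂(empMeas (τ t) x t n) = _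
      rw [empMeas, integral_smul_measure, integral_finsetSum_measure (fun k _ => hint _ f)]
      simp only [integral_dirac, ← Function.iterate_succ_apply' (τ t)]
      rw [Finset.sum_range_sub (fun k => f ((τ t)^[k] x))]
      rw [ENNReal.toReal_inv, ENNReal.toReal_natCast]
      simp
    have h2 : Tendsto (fun n : ℕ => ((n : ℝ) + 1)⁻¹ * (f ((τ t)^[n + 1] x) - f x))
        atTop (𝓝 0) := by
      have h3 : Tendsto (fun n : ℕ => ((n : ℝ) + 1)⁻¹ * (‖f‖ + ‖f‖)) atTop (𝓝 0) := by
        have := (tendsto_one_div_add_atTop_nhds_zero_nat (𝕜 := ℝ)).mul_const (‖f‖ + ‖f‖)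
        simpa using this
      refine squeeze_zero_norm (fun n => ?_) h3
      rw [norm_mul, Real.norm_of_nonneg (by positivity : (0 : ℝ) ≤ ((n : ℝ) + 1)⁻¹)]
      gcongr
      exact (norm_sub_le _ _).trans (add_le_add (f.norm_coe_le_norm _) (f.norm_coe_le_norm _))
    have h4 := h2.mono_left (Nat.hyperfilter_le_atTop)
    exact h4.congr fun n => (hval n).symm
  · refine IsClosed.isCompact ?_
    simp only [Holonomic, Set.ofPred_forall]
    exact isClosed_iInter fun f => isClosed_eq (hcont f) continuous_const
  · intro μ κ hμ hκ a b hab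
    have ha : a ≠ ⊤ := by rintro rfl; simp at hab
    have hb : b ≠ ⊤ := by rintro rfl; simp at hab
    refine ⟨⟨a • (μ : Measure (X × Θ)) + b • (κ : Measure (X × Θ)), ⟨by simp [hab]⟩⟩, ?_, rfl⟩
    intro f
    change ∫ p : X × Θ, (f (τ p.2 p.1) - f p.1)
      ∂(a • (μ : Measure (X × Θ)) + b • (κ : Measure (X × Θ))) = 0
    rw [integral_add_measure ((hint _ f).smul_measure ha) ((hint _ f).smul_measure hb),
      integral_smul_measure, integral_smul_measure, hμ f, hκ f]
    simp
end

section
/- Fix x_0 ∈ X and a sequence (θ_j)_{j≥0} in Θ, and define x_{j+1} = τ_{θ_j}(x_j) for j ≥ 0. Let μ̂_N = (1/N)·Σ_{j=0}^{N−1} δ_{(x_j, θ_j)} be the empirical probability measures on X × Θ. Then every weak-* cluster point of the sequence (μ̂_N)_{N≥1} is a holonomic probability measure with respect to τ. -/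
open MeasureTheory Filter Topology

variable {X Θ : Type*}

/-- every weak-* cluster point of the empirical measures
`μ̂_N = (1/N) Σ_{j<N} δ_{(x_j, θ_j)}` along an orbit `x_{j+1} = τ_{θ_j}(x_j)` is holonomic. -/
theorem clusterPt_empirical_holonomic
    [MetricSpace X] [CompactSpace X] [MeasurableSpace X] [BorelSpace X]
    [MetricSpace Θ] [CompactSpace Θ] [MeasurableSpace Θ] [BorelSpace Θ]
    (τ : Θ → X → X) (hτ : Continuous fun p : Θ × X => τ p.1 p.2)
    (x0 : X) (θs : ℕ → Θ) (xs : ℕ → X)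
    (hx0 : xs 0 = x0)
    (hxs : ∀ j : ℕ, xs (j + 1) = τ (θs j) (xs j))
    (μhat : ℕ → ProbabilityMeasure (X × Θ))
    (hμhat : ∀ N : ℕ, 1 ≤ N →
      (μhat N : Measure (X × Θ)) =
        ((N : ENNReal))⁻¹ • ∑ j ∈ Finset.range N, Measure.dirac (xs j, θs j))
    (μ : ProbabilityMeasure (X × Θ))
    (hcluster : MapClusterPt μ atTop μhat) :
    Holonomic τ (μ : Measure (X × Θ)) := by
  intro f
  have hc : Continuous fun p : X × Θ => f (τ p.2 p.1) - f p.1 := by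
    have h1 : Continuous fun p : X × Θ => τ p.2 p.1 := hτ.comp continuous_swap
    exact (f.continuous.comp h1).sub (f.continuous.comp continuous_fst)
  let g : BoundedContinuousFunction (X × Θ) ℝ := BoundedContinuousFunction.mkOfCompact ⟨_, hc⟩
  have hcont : Continuous fun ν : ProbabilityMeasure (X × Θ) =>
      ∫ p, g p ∂(ν : Measure (X × Θ)) :=
    ProbabilityMeasure.continuous_integral_boundedContinuousFunction g
  have hval : ∀ N : ℕ, 1 ≤ N →
      ∫ p, g p ∂(μhat N : Measure (X × Θ)) = (N : ℝ)⁻¹ * (f (xs N) - f (xs 0)) := by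
    intro N hN
    rw [hμhat N hN, integral_smul_measure, integral_finset_sum_measure]
    · have h2 : ∀ j ∈ Finset.range N, ∫ p, g p ∂(Measure.dirac (xs j, θs j))
          = f (xs (j + 1)) - f (xs j) := by
        intro j _
        rw [integral_dirac, hxs j]
        rfl
      rw [Finset.sum_congr rfl h2, Finset.sum_range_sub (fun j => f (xs j))]
      simp
    · intro j _
      exact g.integrable _
  have hlim : Tendsto (fun N : ℕ => ∫ p, g p ∂(μhat N : Measure (X × Θ))) atTop (𝓝 0) := by
    have hb : Tendsto (fun N : ℕ => (N : ℝ)⁻¹ * (2 * ‖f‖)) atTop (𝓝 0) := by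
      simpa using (tendsto_inv_atTop_nhds_zero_nat (𝕜 := ℝ)).mul_const (2 * ‖f‖)
    refine squeeze_zero_norm' ?_ hb
    filter_upwards [eventually_ge_atTop 1] with N hN
    rw [hval N hN, norm_mul, Real.norm_of_nonneg (by positivity : (0 : ℝ) ≤ (N : ℝ)⁻¹)]
    gcongr
    have h3 := norm_sub_le (f (xs N)) (f (xs 0))
    have h4 := f.norm_coe_le_norm (xs N)
    have h5 := f.norm_coe_le_norm (xs 0)
    linarith
  have hcl : MapClusterPt (∫ p, g p ∂(μ : Measure (X × Θ))) atTop
      (fun N : ℕ => ∫ p, g p ∂(μhat N : Measure (X × Θ))) :=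
    hcluster.continuousAt_comp hcont.continuousAt
  have hfin : ∫ p, g p ∂(μ : Measure (X × Θ)) = 0 := by
    have : ClusterPt (∫ p, g p ∂(μ : Measure (X × Θ))) (𝓝 (0 : ℝ)) := hcl.clusterPt.mono hlim
    have hne : (𝓝 (∫ p, g p ∂(μ : Measure (X × Θ))) ⊓ 𝓝 (0 : ℝ)).NeBot := this
    exact eq_of_nhds_neBot hne
  exact hfin
end

section
/- Let ν̂ be a holonomic Borel probability measure on X × Θ with X-marginal ν, let μ be a Borel probability measure on Θ, and suppose ν̂ disintegrates with densities with respect to μ: there is a measurable J : X × Θ → [0,∞), with J > 0 (dμ(θ)dν(x))-almost everywhere and (x,θ) ↦ J(x,θ)·log J(x,θ) integrable with respect to dμ(θ)dν(x), such that ∫_{X×Θ} g dν̂ = ∫_X ∫_Θ g(x,θ)·J(x,θ) dμ(θ) dν(x) for every bounded measurable g. Define the average entropy h_a(ν̂) = −∫_X ∫_Θ log(J(x,θ))·J(x,θ) dμ(θ) dν(x) and the variational entropy h_v(ν̂) = inf { ∫_X log(B_μ(g)/g) dν : g ∈ C(X,ℝ), g > 0 }, where B_μ(g)(x) = ∫_Θ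 g(τ_θ(x)) dμ(θ). Then h_a(ν̂) ≤ h_v(ν̂) ≤ 0. -/
open MeasureTheory Filter Topology

variable {X Θ : Type*}

/-- The variational entropy `h_v(ν) = inf { ∫ log(B_μ(g)/g) dν : g ∈ C(X,ℝ), g > 0 }`,
where `B_μ(g)(x) = ∫_Θ g(τ_θ(x)) dμ(θ)`. -/
noncomputable def varEntropy [MeasurableSpace X] [MeasurableSpace Θ]
    [TopologicalSpace X] [TopologicalSpace Θ]
    (τ : Θ → X → X) (μ : Measure Θ) (ν : Measure X) : ℝ :=
  sInf {r : ℝ | ∃ g : C(X, ℝ), (∀ x, 0 < g x) ∧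
    r = ∫ x, Real.log ((∫ θ, g (τ θ x) ∂μ) / g x) ∂ν}

lemma aux_young (a j : ℝ) (ha : 0 < a) (hj : 0 ≤ j) :
    j * Real.log a - j * Real.log j ≤ a - j := by
  rcases hj.eq_or_lt with h | h
  · subst h; simp; exact ha.le
  · have h1 := Real.log_le_sub_one_of_pos (div_pos ha h)
    rw [Real.log_div ha.ne' h.ne'] at h1
    have h2 := mul_le_mul_of_nonneg_left h1 hj
    have h3 : j * (a / j - 1) = a - j := by field_simp
    linarith

lemma aux_dom (j : ℝ) (hj : 0 ≤ j) : |j| ≤ Real.exp 1 + |j * Real.log j| := by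
  rw [abs_of_nonneg hj]
  rcases le_total j (Real.exp 1) with h | h
  · have := abs_nonneg (j * Real.log j); linarith
  · have h1 : 1 ≤ Real.log j := by
      rw [Real.le_log_iff_exp_le (lt_of_lt_of_le (Real.exp_pos 1) h)]; exact h
    have h2 := le_abs_self (j * Real.log j)
    have := Real.exp_pos 1
    nlinarith

/-- for a holonomic `ν̂` disintegrating with densities `J` w.r.t. the a-priori
probability `μ`, the average entropy is at most the variational entropy, which is `≤ 0`. -/
theorem average_entropy_le_var_entropy_le_zero
    [MetricSpace X] [CompactSpace X] [MeasurableSpace X] [BorelSpace X]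
    [MetricSpace Θ] [CompactSpace Θ] [MeasurableSpace Θ] [BorelSpace Θ]
    (τ : Θ → X → X) (hτ : Continuous fun p : Θ × X => τ p.1 p.2)
    (νhat : Measure (X × Θ)) [IsProbabilityMeasure νhat]
    (hhol : Holonomic τ νhat)
    (ν : Measure X) (hν : ν = νhat.map Prod.fst)
    (μ : Measure Θ) [IsProbabilityMeasure μ]
    (J : X × Θ → ℝ) (hJmeas : Measurable J) (hJnn : ∀ p, 0 ≤ J p)
    (hJpos : ∀ᵐ p ∂(ν.prod μ), 0 < J p)
    (hJlogint : Integrable (fun p : X × Θ => J p * Real.log (J p)) (ν.prod μ))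
    (hdisint : ∀ g : X × Θ → ℝ, Measurable g → (∃ C : ℝ, ∀ p, |g p| ≤ C) →
      ∫ p, g p ∂νhat = ∫ x, ∫ θ, g (x, θ) * J (x, θ) ∂μ ∂ν) :
    (-∫ x, ∫ θ, Real.log (J (x, θ)) * J (x, θ) ∂μ ∂ν) ≤ varEntropy τ μ ν ∧
    varEntropy τ μ ν ≤ 0 := by
  have hsX : SecondCountableTopology X := inferInstance
  have hsT : SecondCountableTopology Θ := inferInstance
  have hνp : IsProbabilityMeasure ν := by
    rw [hν]; exact Measure.isProbabilityMeasure_map measurable_fst.aemeasurable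
  have hJint : Integrable J (ν.prod μ) := by
    refine Integrable.mono' ((integrable_const (Real.exp 1)).add hJlogint.abs)
      hJmeas.aestronglyMeasurable (Eventually.of_forall fun p => ?_)
    rw [Real.norm_eq_abs]
    exact aux_dom _ (hJnn p)
  -- Fubini form of the disintegration
  have hdis : ∀ g : X × Θ → ℝ, Measurable g → (∃ C : ℝ, ∀ p, |g p| ≤ C) →
      Integrable (fun p => g p * J p) (ν.prod μ) ∧
      ∫ p, g p ∂νhat = ∫ p, g p * J p ∂(ν.prod μ) := by
    rintro g hg ⟨C, hC⟩
    have hi : Integrable (fun p => g p * J p) (ν.prod μ) :=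
      hJint.bdd_mul hg.aestronglyMeasurable (Eventually.of_forall hC)
    exact ⟨hi, by rw [hdisint g hg ⟨C, hC⟩, integral_prod _ hi]⟩
  have hJ1 : ∫ p, J p ∂(ν.prod μ) = 1 := by
    have := (hdis (fun _ => 1) measurable_const ⟨1, by simp⟩).2
    simpa using this.symm
  have hent : ∫ x, ∫ θ, Real.log (J (x, θ)) * J (x, θ) ∂μ ∂ν
      = ∫ p, J p * Real.log (J p) ∂(ν.prod μ) := by
    rw [integral_prod _ hJlogint]
    simp only [mul_comm]
  have key : ∀ g : C(X, ℝ), (∀ x, 0 < g x) →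
      (-∫ x, ∫ θ, Real.log (J (x, θ)) * J (x, θ) ∂μ ∂ν) ≤
        ∫ x, Real.log ((∫ θ, g (τ θ x) ∂μ) / g x) ∂ν := by
    intro g hg
    obtain ⟨x₀⟩ : Nonempty X := by
      by_contra h
      rw [not_nonempty_iff] at h
      have := hνp.measure_univ
      rw [Set.univ_eq_empty_iff.mpr h] at this
      simp at this
    obtain ⟨a, -, ha⟩ := isCompact_univ.exists_isMinOn ⟨x₀, Set.mem_univ _⟩
      g.continuous.continuousOn
    obtain ⟨b, -, hb⟩ := isCompact_univ.exists_isMaxOn ⟨x₀, Set.mem_univ _⟩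
      g.continuous.continuousOn
    have hm : ∀ x, g a ≤ g x := fun x => ha (Set.mem_univ x)
    have hM : ∀ x, g x ≤ g b := fun x => hb (Set.mem_univ x)
    have hτ' : Continuous fun p : X × Θ => τ p.2 p.1 := hτ.comp continuous_swap
    have hgτm : Measurable fun p : X × Θ => g (τ p.2 p.1) :=
      (g.continuous.comp hτ').measurable
    have hgτi : ∀ x, Integrable (fun θ => g (τ θ x)) μ := fun x => by
      refine Integrable.mono' (integrable_const (g b))
        (hgτm.comp measurable_prodMk_left).aestronglyMeasurable
        (Eventually.of_forall fun θ => ?_)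
      rw [Real.norm_eq_abs, abs_of_pos (hg _)]
      exact hM _
    set B : X → ℝ := fun x => ∫ θ, g (τ θ x) ∂μ with hB
    have hBm : Measurable B :=
      (hgτm.stronglyMeasurable.integral_prod_right (ν := μ)).measurable
    have hBl : ∀ x, g a ≤ B x := fun x => by
      have := integral_mono (integrable_const (g a)) (hgτi x) (fun θ => hm (τ θ x))
      simpa using this
    have hBu : ∀ x, B x ≤ g b := fun x => by
      have := integral_mono (hgτi x) (integrable_const (g b)) (fun θ => hM (τ θ x))
      simpa using this
    have hBp : ∀ x, 0 < B x := fun x => (hg a).trans_le (hBl x)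
    have hlog : ∀ t, g a ≤ t → t ≤ g b →
        |Real.log t| ≤ |Real.log (g a)| + |Real.log (g b)| := by
      intro t h1 h2
      have h3 := Real.log_le_log (hg a) h1
      have h4 := Real.log_le_log ((hg a).trans_le h1) h2
      have := neg_abs_le (Real.log (g a))
      have := le_abs_self (Real.log (g b))
      have := abs_nonneg (Real.log (g a))
      have := abs_nonneg (Real.log (g b))
      rw [abs_le]; constructor <;> linarith
    set K := |Real.log (g a)| + |Real.log (g b)| with hK
    -- integrability of bounded functions
    have hbi : ∀ f : X × Θ → ℝ, Measurable f → (∀ p, |f p| ≤ K) → Integrable f νhat :=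
      fun f hf hfK => Integrable.mono' (integrable_const K) hf.aestronglyMeasurable
        (Eventually.of_forall hfK)
    have i1 : Integrable (fun p : X × Θ => Real.log (g (τ p.2 p.1))) νhat :=
      hbi _ hgτm.log fun p => hlog _ (hm _) (hM _)
    have i2 : Integrable (fun p : X × Θ => Real.log (g p.1)) νhat :=
      hbi _ (g.continuous.measurable.comp measurable_fst).log fun p => hlog _ (hm _) (hM _)
    have i3 : Integrable (fun p : X × Θ => Real.log (B p.1)) νhat :=
      hbi _ (hBm.comp measurable_fst).log fun p => hlog _ (hBl _) (hBu _)
    have hh := hhol ⟨fun x => Real.log (g x), g.continuous.log fun x => (hg x).ne'⟩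
    simp only [ContinuousMap.coe_mk] at hh
    rw [integral_sub i1 i2] at hh
    have hrhs : ∫ x, Real.log (B x / g x) ∂ν
        = ∫ p, Real.log (B p.1) ∂νhat - ∫ p, Real.log (g p.1) ∂νhat := by
      have hmeas : Measurable fun x => Real.log (B x / g x) :=
        (hBm.div g.continuous.measurable).log
      rw [hν, integral_map measurable_fst.aemeasurable hmeas.aestronglyMeasurable, ← integral_sub i3 i2]
      exact integral_congr_ae (Eventually.of_forall fun p =>
        Real.log_div (hBp _).ne' (hg _).ne')
    set A : X × Θ → ℝ := fun p => g (τ p.2 p.1) / B p.1 with hA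
    have hAm : Measurable A := hgτm.div (hBm.comp measurable_fst)
    have hAp : ∀ p, 0 < A p := fun p => div_pos (hg _) (hBp _)
    have hAlog : ∀ p, Real.log (A p) = Real.log (g (τ p.2 p.1)) - Real.log (B p.1) :=
      fun p => Real.log_div (hg _).ne' (hBp _).ne'
    have hAi : Integrable A (ν.prod μ) := by
      refine Integrable.mono' (integrable_const (g b / g a)) hAm.aestronglyMeasurable
        (Eventually.of_forall fun p => ?_)
      rw [Real.norm_eq_abs, abs_of_pos (hAp p)]
      exact div_le_div₀ (hg b).le (hM _) (hg a) (hBl _)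
    have hA1 : ∫ p, A p ∂(ν.prod μ) = 1 := by
      rw [integral_prod _ hAi]
      have : ∀ x, ∫ θ, A (x, θ) ∂μ = 1 := fun x => by
        simp only [hA]
        rw [integral_div]
        exact div_self (hBp x).ne'
      simp [this]
    obtain ⟨hi, he⟩ := hdis (fun p => Real.log (A p)) hAm.log ⟨K + K, fun p => by
      rw [hAlog]
      exact (abs_sub _ _).trans (add_le_add (hlog _ (hm _) (hM _)) (hlog _ (hBl _) (hBu _)))⟩
    have he' : ∫ p, Real.log (A p) ∂νhat
        = ∫ p, Real.log (g (τ p.2 p.1)) ∂νhat - ∫ p, Real.log (B p.1) ∂νhat := by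
      rw [← integral_sub i1 i3]
      exact integral_congr_ae (Eventually.of_forall hAlog)
    have hmain := integral_mono (hi.sub hJlogint) (hAi.sub hJint) (fun p => by
      have := aux_young (A p) (J p) (hAp p) (hJnn p)
      simp only [Pi.sub_apply]
      linarith [mul_comm (J p) (Real.log (A p))])
    rw [integral_sub' hi hJlogint, integral_sub' hAi hJint, hA1, hJ1] at hmain
    rw [hent, hrhs]
    linarith
  constructor
  · refine le_csInf ⟨_, 1, by simp, rfl⟩ ?_
    rintro r ⟨g, hg, rfl⟩
    exact key g hg
  · refine csInf_le ⟨-∫ x, ∫ θ, Real.log (J (x, θ)) * J (x, θ) ∂μ ∂ν, ?_⟩ ⟨1, by simp, by simp⟩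
    rintro r ⟨g, hg, rfl⟩
    exact key g hg
end

section
/- Let ν̂ be a holonomic Borel probability measure on X × Θ with X-marginal ν, let μ be a Borel probability measure on Θ, and suppose ν̂ disintegrates with densities with respect to μ: there is a measurable J : X × Θ → [0,∞), with (x,θ) ↦ J(x,θ)·log J(x,θ) integrable with respect to dμ(θ)dν(x), such that ∫_{X×Θ} g dν̂ = ∫_X ∫_Θ g(x,θ)·J(x,θ) dμ(θ) dν(x) for every bounded measurable g. Suppose moreover there is a strictly positive continuous function φ ∈ C(X,ℝ) that is optimal, i.e., J(x,θ) = φ(τ_θ(x))/B_μ(φ)(x) for dμ(θ)dν(x)-almost every (x,θ), where B_μ(g)(x) = ∫_Θ g(τ_θ(x)) dμ(θ). Then the average entropy h_a(ν̂) = −∫_X ∫_Θ log(J(x,θ))·J(x,θ) dμ(θ) dν(x) and the variational entropy h_v(ν̂) = inf { ∫_X log(B_μ(g)/g) dν : g ∈ C(X,ℝ), g > 0 } satisfy h_a(ν̂) = h_v(ν̂) = ∫_X log(B_μ(φ)/φ) dν. -/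
open MeasureTheory Filter Topology

variable {X Θ : Type*}

section Helpers

set_option linter.unusedSectionVars false

variable [MetricSpace X] [CompactSpace X] [MeasurableSpace X] [BorelSpace X]
    [MetricSpace Θ] [CompactSpace Θ] [MeasurableSpace Θ] [BorelSpace Θ]

lemma aux_integrable {Y : Type*} [MetricSpace Y] [CompactSpace Y] [MeasurableSpace Y]
    [BorelSpace Y] (m : Measure Y) [IsFiniteMeasure m] {f : Y → ℝ} (hf : Continuous f) :
    Integrable f m :=
  hf.integrable_of_hasCompactSupport (HasCompactSupport.of_compactSpace f)

lemma aux_bdd {Y : Type*} [TopologicalSpace Y] [CompactSpace Y] {f : Y → ℝ}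
    (hf : Continuous f) : ∃ C : ℝ, ∀ p, |f p| ≤ C := by
  obtain ⟨C, hC⟩ := isCompact_univ.exists_bound_of_continuousOn hf.continuousOn
  exact ⟨C, fun p => hC p (Set.mem_univ p)⟩

lemma aux_cont (τ : Θ → X → X) (hτ : Continuous fun p : Θ × X => τ p.1 p.2)
    (μ : Measure Θ) [IsProbabilityMeasure μ] (g : C(X, ℝ)) :
    Continuous fun x => ∫ θ, g (τ θ x) ∂μ := by
  obtain ⟨C, hC⟩ := aux_bdd g.continuous
  refine continuous_of_dominated (bound := fun _ => C) ?_ ?_ (integrable_const C) ?_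
  · intro x
    have : Continuous fun θ => g (τ θ x) :=
      g.continuous.comp (hτ.comp (by fun_prop : Continuous fun θ : Θ => (θ, x)))
    exact (aux_integrable μ this).aestronglyMeasurable
  · intro x
    exact Eventually.of_forall fun θ => hC _
  · refine Eventually.of_forall fun θ => ?_
    exact g.continuous.comp (hτ.comp (by fun_prop : Continuous fun x : X => (θ, x)))

lemma aux_pos (τ : Θ → X → X) (hτ : Continuous fun p : Θ × X => τ p.1 p.2)
    (μ : Measure Θ) [IsProbabilityMeasure μ] (g : C(X, ℝ)) (hg : ∀ x, 0 < g x) (x : X) :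
    0 < ∫ θ, g (τ θ x) ∂μ := by
  have : Continuous fun θ => g (τ θ x) :=
    g.continuous.comp (hτ.comp (by fun_prop : Continuous fun θ : Θ => (θ, x)))
  rw [integral_pos_iff_support_of_nonneg (fun θ => (hg _).le) (aux_integrable μ this)]
  have h : Function.support (fun θ => g (τ θ x)) = Set.univ := by
    ext θ
    simp [(hg (τ θ x)).ne']
  rw [h]
  simp

lemma aux_contK (τ : Θ → X → X) (hτ : Continuous fun p : Θ × X => τ p.1 p.2)
    (μ : Measure Θ) [IsProbabilityMeasure μ] (g : C(X, ℝ)) (hg : ∀ x, 0 < g x) :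
    Continuous fun p : X × Θ => g (τ p.2 p.1) / ∫ θ, g (τ θ p.1) ∂μ := by
  refine Continuous.div ?_ ((aux_cont τ hτ μ g).comp continuous_fst)
    (fun p => (aux_pos τ hτ μ g hg p.1).ne')
  exact g.continuous.comp (hτ.comp continuous_swap)

lemma aux_log (τ : Θ → X → X) (hτ : Continuous fun p : Θ × X => τ p.1 p.2)
    (νhat : Measure (X × Θ)) [IsProbabilityMeasure νhat]
    (hhol : Holonomic τ νhat)
    (μ : Measure Θ) [IsProbabilityMeasure μ] (g : C(X, ℝ)) (hg : ∀ x, 0 < g x) :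
    ∫ p, Real.log (g (τ p.2 p.1) / ∫ θ, g (τ θ p.1) ∂μ) ∂νhat
      = - ∫ x, Real.log ((∫ θ, g (τ θ x) ∂μ) / g x) ∂(νhat.map Prod.fst) := by
  have hB := aux_cont τ hτ μ g
  have hBp := aux_pos τ hτ μ g hg
  let lg : C(X, ℝ) := ⟨fun x => Real.log (g x), g.continuous.log fun x => (hg x).ne'⟩
  have hq : Continuous fun x => Real.log ((∫ θ, g (τ θ x) ∂μ) / g x) :=
    (hB.div g.continuous fun x => (hg x).ne').log
      fun x => (div_pos (hBp x) (hg x)).ne'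
  have h0 := hhol lg
  have hl : Continuous fun p : X × Θ => lg (τ p.2 p.1) - lg p.1 :=
    (lg.continuous.comp (hτ.comp continuous_swap)).sub (lg.continuous.comp continuous_fst)
  rw [integral_map measurable_fst.aemeasurable hq.measurable.aestronglyMeasurable]
  have : ∀ p : X × Θ, Real.log (g (τ p.2 p.1) / ∫ θ, g (τ θ p.1) ∂μ)
      = (lg (τ p.2 p.1) - lg p.1) - Real.log ((∫ θ, g (τ θ p.1) ∂μ) / g p.1) := by
    intro p
    rw [Real.log_div (hg _).ne' (hBp _).ne', Real.log_div (hBp _).ne' (hg _).ne']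
    simp [lg]
  simp_rw [this]
  have hq2 : Continuous fun p : X × Θ => Real.log ((∫ θ, g (τ θ p.1) ∂μ) / g p.1) :=
    hq.comp continuous_fst
  rw [integral_sub (aux_integrable νhat hl) (aux_integrable νhat hq2), h0, zero_sub]

end Helpers

/-- if moreover there is an optimal positive continuous function `φ`, i.e.
`J(x,θ) = φ(τ_θ(x))/B_μ(φ)(x)` a.e., then
`h_a(ν̂) = h_v(ν̂) = ∫ log(B_μ(φ)/φ) dν`. -/
theorem average_entropy_eq_var_entropy_of_optimal
    [MetricSpace X] [CompactSpace X] [MeasurableSpace X] [BorelSpace X]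
    [MetricSpace Θ] [CompactSpace Θ] [MeasurableSpace Θ] [BorelSpace Θ]
    (τ : Θ → X → X) (hτ : Continuous fun p : Θ × X => τ p.1 p.2)
    (νhat : Measure (X × Θ)) [IsProbabilityMeasure νhat]
    (hhol : Holonomic τ νhat)
    (ν : Measure X) (hν : ν = νhat.map Prod.fst)
    (μ : Measure Θ) [IsProbabilityMeasure μ]
    (J : X × Θ → ℝ) (hJmeas : Measurable J) (hJnn : ∀ p, 0 ≤ J p)
    (hJlogint : Integrable (fun p : X × Θ => J p * Real.log (J p)) (ν.prod μ))
    (hdisint : ∀ g : X × Θ → ℝ, Measurable g → (∃ C : ℝ, ∀ p, |g p| ≤ C) →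
      ∫ p, g p ∂νhat = ∫ x, ∫ θ, g (x, θ) * J (x, θ) ∂μ ∂ν)
    (φ : C(X, ℝ)) (hφ : ∀ x, 0 < φ x)
    (hopt : ∀ᵐ p ∂(ν.prod μ), J p = φ (τ p.2 p.1) / ∫ θ, φ (τ θ p.1) ∂μ) :
    (-∫ x, ∫ θ, Real.log (J (x, θ)) * J (x, θ) ∂μ ∂ν) = varEntropy τ μ ν ∧
    varEntropy τ μ ν = ∫ x, Real.log ((∫ θ, φ (τ θ x) ∂μ) / φ x) ∂ν := by
  have hBp := aux_pos τ hτ μ φ hφ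
  have hK := aux_contK τ hτ μ φ hφ
  have : IsProbabilityMeasure ν := by
    rw [hν]; exact Measure.isProbabilityMeasure_map measurable_fst.aemeasurable
  have hopt' : ∀ᵐ x ∂ν, ∀ᵐ θ ∂μ, J (x, θ) = φ (τ θ x) / ∫ θ, φ (τ θ x) ∂μ :=
    Measure.ae_ae_of_ae_prod hopt
  have hKpos : ∀ p : X × Θ, 0 < φ (τ p.2 p.1) / ∫ θ, φ (τ θ p.1) ∂μ :=
    fun p => div_pos (hφ _) (hBp _)
  have hd : ∀ g : X × Θ → ℝ, Continuous g → ∫ p, g p ∂νhat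
      = ∫ x, ∫ θ, g (x, θ) * (φ (τ θ x) / ∫ θ, φ (τ θ x) ∂μ) ∂μ ∂ν := by
    intro g hg
    rw [hdisint g hg.measurable (aux_bdd hg)]
    refine integral_congr_ae ?_
    filter_upwards [hopt'] with x hx
    refine integral_congr_ae ?_
    filter_upwards [hx] with θ hθ
    rw [hθ]
  have ha : (-∫ x, ∫ θ, Real.log (J (x, θ)) * J (x, θ) ∂μ ∂ν)
      = ∫ x, Real.log ((∫ θ, φ (τ θ x) ∂μ) / φ x) ∂ν := by
    have h1 := aux_log τ hτ νhat hhol μ φ hφ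
    rw [← hν] at h1
    rw [← neg_eq_iff_eq_neg.mpr h1, hd _ (hK.log fun p => (hKpos p).ne')]
    congr 1
    refine integral_congr_ae ?_
    filter_upwards [hopt'] with x hx
    refine integral_congr_ae ?_
    filter_upwards [hx] with θ hθ
    rw [hθ]
  have hv : varEntropy τ μ ν = ∫ x, Real.log ((∫ θ, φ (τ θ x) ∂μ) / φ x) ∂ν := by
    refine IsLeast.csInf_eq ⟨⟨φ, hφ, rfl⟩, ?_⟩
    rintro r ⟨g, hg, rfl⟩
    have hGp := aux_pos τ hτ μ g hg
    have hG := aux_contK τ hτ μ g hg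
    have hGpos : ∀ p : X × Θ, 0 < g (τ p.2 p.1) / ∫ θ, g (τ θ p.1) ∂μ :=
      fun p => div_pos (hg _) (hGp _)
    have h1 := aux_log τ hτ νhat hhol μ φ hφ
    have h2 := aux_log τ hτ νhat hhol μ g hg
    rw [← hν] at h1 h2
    have hR : Continuous fun p : X × Θ => (g (τ p.2 p.1) / ∫ θ, g (τ θ p.1) ∂μ) /
        (φ (τ p.2 p.1) / ∫ θ, φ (τ θ p.1) ∂μ) := hG.div hK fun p => (hKpos p).ne'
    have i1 := aux_integrable νhat (hK.log fun p => (hKpos p).ne')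
    have i2 := aux_integrable νhat (hG.log fun p => (hGpos p).ne')
    have i3 := aux_integrable νhat hR
    have h3 := integral_mono (i2.sub i1) (i3.sub (integrable_const (1 : ℝ))) (fun p => by
      have := Real.log_le_sub_one_of_pos (div_pos (hGpos p) (hKpos p))
      rw [Real.log_div (hGpos p).ne' (hKpos p).ne'] at this
      exact this)
    have h4 : ∫ p : X × Θ, (g (τ p.2 p.1) / ∫ θ, g (τ θ p.1) ∂μ) /
        (φ (τ p.2 p.1) / ∫ θ, φ (τ θ p.1) ∂μ) ∂νhat = 1 := by
      rw [hd _ hR]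
      have : ∀ x, ∫ θ, (g (τ θ x) / ∫ θ, g (τ θ x) ∂μ) /
        (φ (τ θ x) / ∫ θ, φ (τ θ x) ∂μ) * (φ (τ θ x) / ∫ θ, φ (τ θ x) ∂μ) ∂μ = 1 := by
        intro x
        have : ∀ θ, (g (τ θ x) / ∫ θ, g (τ θ x) ∂μ) /
          (φ (τ θ x) / ∫ θ, φ (τ θ x) ∂μ) * (φ (τ θ x) / ∫ θ, φ (τ θ x) ∂μ)
            = g (τ θ x) / ∫ θ, g (τ θ x) ∂μ := fun θ =>
          div_mul_cancel₀ _ (hKpos (x, θ)).ne'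
        simp_rw [this]
        rw [integral_div, div_self (hGp x).ne']
      simp [this]
    simp only [Pi.sub_apply] at h3
    rw [integral_sub i2 i1, integral_sub i3 (integrable_const _), h4, h1, h2] at h3
    simp at h3
    linarith
  exact ⟨ha.trans hv.symm, hv⟩
end
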